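/- For disjoint vertex sets $U,W$ of a graph $G$, let $E_G(U,W)$ be the set of edges with one endpoint in $U$ and the other in $W$, and for nonempty $U,W$ let $d(U,W) := |E_G(U,W)|/(|U||W|)$. For $\gamma,p\in(0,1]$, a graph $G$ on a finite vertex set $V$ is called $(\gamma,p)$-pseudorandom if $|d(U,W)-p|\le\gamma p$ for every pair of disjoint sets $U,W\subseteq V$ with $|U|,|W|\ge\gamma|V|$. Let $\gamma,p\in(0,1]$ and let $G=(V,E)$ be a $(\gamma,p)$-pseudorandom graph on $n\ge 1$ vertices. Then every set $U\subseteq V$ with $|U|\ge 2\lceil\gamma n\rceil$ (equivalently, $\lfloor |U|/2\rfloor\ge\gamma n$) satisfies $$\left|\frac{|E(U)|}{\binom{|U|}{2}}-p\right|\le\gamma p,$$ where $E(U)$ denotes the set of edges of $G$ with both endpoints in $U$. -/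

import Mathlib

/-- The number of edges of `G` with one endpoint in `U` and the other in `W`
(for disjoint `U`, `W`, each such edge corresponds to exactly one ordered pair). -/
noncomputable def edgesBetween {V : Type*} (G : SimpleGraph V) (U W : Set V) : ℕ :=
  {q : V × V | q.1 ∈ U ∧ q.2 ∈ W ∧ G.Adj q.1 q.2}.ncard

/-- A graph `G` on vertex set `V` is `(γ,p)`-pseudorandom if for every pair of
disjoint sets `U, W ⊆ V` with `|U|,|W| ≥ γ|V|` the density `d(U,W)` satisfies
`|d(U,W) − p| ≤ γp`. -/
def IsPseudorandom {V : Type*} [Fintype V] (G : SimpleGraph V) (γ p : ℝ) : Prop :=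
  ∀ U W : Set V, Disjoint U W →
    γ * (Fintype.card V : ℝ) ≤ (U.ncard : ℝ) → γ * (Fintype.card V : ℝ) ≤ (W.ncard : ℝ) →
    |(edgesBetween G U W : ℝ) / ((U.ncard : ℝ) * (W.ncard : ℝ)) - p| ≤ γ * p

open Finset in
/-- An edge of `G` inside `U` corresponds to two ordered pairs of adjacent vertices of `U`. -/
theorem two_mul_ncard_edges_within {V : Type*} [Fintype V] (G : SimpleGraph V) (U : Set V) :
    2 * {e ∈ G.edgeSet | ∀ v ∈ e, v ∈ U}.ncard = edgesBetween G U U := by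
  classical
  let H : SimpleGraph V :=
    { Adj := fun x y => x ∈ U ∧ y ∈ U ∧ G.Adj x y
      symm := ⟨fun _ _ h => ⟨h.2.1, h.1, h.2.2.symm⟩⟩
      loopless := ⟨fun _ h => G.loopless.irrefl _ h.2.2⟩ }
  have hset : {e ∈ G.edgeSet | ∀ v ∈ e, v ∈ U} = (H.edgeFinset : Set (Sym2 V)) := by
    ext e
    induction e using Sym2.ind with
    | _ x y =>
      simp only [Set.mem_ofPred_eq, SimpleGraph.mem_edgeSet, Sym2.mem_iff, forall_eq_or_imp,
        forall_eq, SimpleGraph.coe_edgeFinset, H]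
      tauto
  have hpairs : {q : V × V | q.1 ∈ U ∧ q.2 ∈ U ∧ G.Adj q.1 q.2} =
      ((univ.filter fun q : V × V => H.Adj q.1 q.2 : Finset (V × V)) : Set (V × V)) := by
    ext q
    simp [H]
  rw [edgesBetween, hset, hpairs, Set.ncard_coe_finset, Set.ncard_coe_finset,
    SimpleGraph.two_mul_card_edgeFinset]

open Finset in
/-- The number of `(a + 1)`-subsets of `s` that contain `x` and avoid `y`. -/
theorem card_powersetCard_filter_mem_notMem {α : Type*} [DecidableEq α] (s : Finset α) (a : ℕ)
    {x y : α} (hx : x ∈ s) (hy : y ∈ s) (hxy : x ≠ y) :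
    #{A ∈ s.powersetCard (a + 1) | x ∈ A ∧ y ∉ A} = (#s - 2).choose a := by
  have hcard : #((s.erase x).erase y) = #s - 2 := by
    rw [card_erase_of_mem (by simp [hy, hxy.symm]), card_erase_of_mem hx]
    omega
  rw [← hcard, ← card_powersetCard]
  refine card_bij' (fun A _ => A.erase x) (fun B _ => insert x B) ?_ ?_ ?_ ?_
  · intro A hA
    simp only [mem_filter, mem_powersetCard] at hA ⊢
    obtain ⟨⟨hAs, hAc⟩, hxA, hyA⟩ := hA
    refine ⟨fun z hz => ?_, by rw [card_erase_of_mem hxA, hAc]; rfl⟩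
    rw [mem_erase] at hz
    simp only [mem_erase]
    exact ⟨fun h => hyA (h ▸ hz.2), hz.1, hAs hz.2⟩
  · intro B hB
    simp only [mem_filter, mem_powersetCard] at hB ⊢
    obtain ⟨hBs, hBc⟩ := hB
    have hxB : x ∉ B := fun h => by simpa using hBs h
    have hyB : y ∉ B := fun h => by simpa using hBs h
    refine ⟨⟨insert_subset hx fun z hz => ?_, by rw [card_insert_of_notMem hxB, hBc]⟩,
      mem_insert_self _ _, by simp [hxy.symm, hyB]⟩
    exact mem_of_mem_erase (mem_of_mem_erase (hBs hz))
  · intro A hA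
    exact insert_erase (mem_filter.1 hA).2.1
  · intro B hB
    refine erase_insert fun h => ?_
    simpa using (mem_powersetCard.1 hB).1 h

open Finset in
/-- Double counting of the adjacent pairs of `s` split by an `(a + 1)`-subset of `s`. -/
theorem sum_edgesBetween_powersetCard {V : Type*} [Fintype V] [DecidableEq V] (G : SimpleGraph V)
    (s : Finset V) (a : ℕ) :
    ∑ A ∈ s.powersetCard (a + 1), edgesBetween G (A : Set V) ((s \ A : Finset V) : Set V) =
      edgesBetween G (s : Set V) (s : Set V) * (#s - 2).choose a := by
  classical
  set P : Finset (V × V) := {q | q.1 ∈ s ∧ q.2 ∈ s ∧ G.Adj q.1 q.2} with hP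
  have hs : edgesBetween G (s : Set V) (s : Set V) = #P := by
    rw [edgesBetween, ← Set.ncard_coe_finset]
    congr 1
    ext q
    simp [hP]
  have hA : ∀ A ∈ s.powersetCard (a + 1),
      edgesBetween G (A : Set V) ((s \ A : Finset V) : Set V) =
        #(P.bipartiteAbove (fun A q => q.1 ∈ A ∧ q.2 ∉ A) A) := by
    intro A hA
    have hsub := (mem_powersetCard.1 hA).1
    rw [edgesBetween, ← Set.ncard_coe_finset]
    congr 1
    ext q
    have := @hsub q.1
    simp only [Set.mem_ofPred_eq, mem_coe, mem_sdiff, mem_bipartiteAbove, hP, mem_filter,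
      mem_univ, true_and]
    tauto
  rw [sum_congr rfl hA, sum_card_bipartiteAbove_eq_sum_card_bipartiteBelow, hs,
    ← smul_eq_mul, ← sum_const]
  refine sum_congr rfl fun q hq => ?_
  obtain ⟨h1, h2, h3⟩ := (mem_filter.1 hq).2
  exact card_powersetCard_filter_mem_notMem s a h1 h2 h3.ne

theorem choose_mul_succ_mul_succ (a b : ℕ) :
    (a + b + 2).choose (a + 1) * ((a + 1) * (b + 1)) =
      (a + b + 2) * (a + b + 1) * (a + b).choose a := by
  have h1 := Nat.add_one_mul_choose_eq (a + b + 1) a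
  have h2 := Nat.choose_mul_succ_eq (a + b) a
  rw [show a + b + 1 - a = b + 1 by omega] at h2
  calc _ = (a + b + 2).choose (a + 1) * (a + 1) * (b + 1) := by ring
    _ = (a + b + 2) * ((a + b + 1).choose a * (b + 1)) := by rw [← h1]; ring
    _ = _ := by rw [← h2]; ring

open Finset in
/-- If `G` is a `(γ,p)`-pseudorandom graph on `n ≥ 1` vertices, then every `U ⊆ V` with
`|U| ≥ 2⌈γn⌉` satisfies `| |E(U)| / C(|U|,2) − p | ≤ γp`, where `E(U)` is the set of
edges of `G` with both endpoints in `U`. Since `γn > 0`, such a `U` has at least two elements. -/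
theorem pseudorandom_internal_density
    {V : Type*} [Fintype V] [Nonempty V] (G : SimpleGraph V) (n : ℕ) (hn : Fintype.card V = n)
    (γ p : ℝ) (hγ0 : 0 < γ) (hγ1 : γ ≤ 1) (hp0 : 0 < p) (hp1 : p ≤ 1)
    (hG : IsPseudorandom G γ p)
    (U : Set V) (hU : 2 * ⌈γ * (n : ℝ)⌉₊ ≤ U.ncard) :
    |({e ∈ G.edgeSet | ∀ v ∈ e, v ∈ U}.ncard : ℝ) / (U.ncard.choose 2 : ℝ) - p|
      ≤ γ * p := by
  classical
  have hn0 : 0 < n := hn ▸ Fintype.card_pos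
  have hceil : 0 < ⌈γ * (n : ℝ)⌉₊ := Nat.ceil_pos.2 (by positivity)
  have htwo := two_mul_ncard_edges_within G U
  obtain ⟨s, rfl⟩ : ∃ s : Finset V, (s : Set V) = U := ⟨U.toFinset, by simp⟩
  rw [Set.ncard_coe_finset] at hU ⊢
  set E := {e ∈ G.edgeSet | ∀ v ∈ e, v ∈ (s : Set V)}.ncard
  obtain ⟨a, b, hab, ha, hb⟩ : ∃ a b, #s = a + b + 2 ∧ ⌈γ * (n : ℝ)⌉₊ ≤ a + 1 ∧
      ⌈γ * (n : ℝ)⌉₊ ≤ b + 1 :=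
    ⟨⌈γ * (n : ℝ)⌉₊ - 1, #s - ⌈γ * (n : ℝ)⌉₊ - 1, by omega, by omega, by omega⟩
  have hsplit : ∀ A ∈ s.powersetCard (a + 1),
      |(edgesBetween G (A : Set V) ((s \ A : Finset V) : Set V) : ℝ) -
        p * ((a + 1) * (b + 1))| ≤ γ * p * ((a + 1) * (b + 1)) := by
    intro A hA
    obtain ⟨hAs, hAc⟩ := mem_powersetCard.1 hA
    have hBc : #(s \ A) = b + 1 := by rw [card_sdiff_of_subset hAs]; omega
    have h := hG A (s \ A : Finset V) (disjoint_coe.2 disjoint_sdiff)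
    rw [Set.ncard_coe_finset, Set.ncard_coe_finset, hAc, hBc, hn] at h
    have h := h (Nat.ceil_le.1 ha) (Nat.ceil_le.1 hb)
    rw [Nat.cast_add_one, Nat.cast_add_one] at h
    have hpos : (0 : ℝ) < (a + 1) * (b + 1) := by positivity
    rw [div_sub' hpos.ne', abs_div, abs_of_pos hpos, div_le_iff₀ hpos] at h
    rwa [mul_comm p]
  have hsum := (abs_sum_le_sum_abs _ _).trans (sum_le_sum hsplit)
  rw [sum_sub_distrib, ← Nat.cast_sum, sum_edgesBetween_powersetCard, ← htwo, sum_const, sum_const,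
    card_powersetCard, hab, Nat.add_sub_cancel, nsmul_eq_mul, nsmul_eq_mul] at hsum
  have hid : ((a + b + 2).choose (a + 1) : ℝ) * ((a + 1) * (b + 1)) =
      (a + b + 2) * (a + b + 1) * (a + b).choose a := by
    exact_mod_cast choose_mul_succ_mul_succ a b
  have hN : (0 : ℝ) < (a + b).choose a := by exact_mod_cast Nat.choose_pos (Nat.le_add_right a b)
  have hC : ((#s).choose 2 : ℝ) = (a + b + 2) * (a + b + 1) / 2 := by
    rw [hab, Nat.cast_choose_two]
    push_cast
    ring
  have hCpos : (0 : ℝ) < (a + b + 2) * (a + b + 1) / 2 := by positivity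
  rw [hC, div_sub' hCpos.ne', abs_div, abs_of_pos hCpos, div_le_iff₀ hCpos]
  refine le_of_mul_le_mul_right ?_ (mul_pos two_pos hN)
  calc _ = |(E - (a + b + 2) * (a + b + 1) / 2 * p) * (2 * ((a + b).choose a : ℝ))| := by
        rw [abs_mul, abs_of_pos (mul_pos two_pos hN)]
    _ = _ := by
        congr 1
        push_cast
        linear_combination p * hid
    _ ≤ _ := hsum
    _ = _ := by linear_combination γ * p * hid
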